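/- arXiv:math/0403086 — 7 statements merged into one kernel-verified Lean document; each statement's English description precedes it below -/
import Mathlib

section
/- For every real number u and every real number z with |z| < 1/2, the series Σ_{n≥0} h_{2n}(u) · z^n/n! converges and equals (1 − 2z)^{−1/2} · exp(u²z/(1 − 2z)), where h_m(u) = Σ_{j=0}^{⌊m/2⌋} m!/(2^j j! (m−2j)!) · u^{m−2j}. -/
/-- The renormalized Hermite polynomial
`h_m(u) = ∑_{j=0}^{⌊m/2⌋} m!/(2^j j! (m−2j)!) u^{m−2j}`. -/
noncomputable def hermiteH (m : ℕ) (u : ℝ) : ℝ :=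
  ∑ j ∈ Finset.range (m / 2 + 1),
    (Nat.factorial m : ℝ) /
      (2 ^ j * Nat.factorial j * Nat.factorial (m - 2 * j)) * u ^ (m - 2 * j)

/-!
The even Hermite polynomials are Laguerre polynomials of parameter `-1/2`:
`h_{2n}(u) = 2^n n! L_n^{(-1/2)}(-u²/2)`. So Doetsch's identity is the Laguerre generating function
`∑ L_n^{(α)}(x) t^n = (1-t)^{-(α+1)} exp(-xt/(1-t))` at `t = 2z`. The latter comes from expanding
`(1-t)^{-(α+1)} exp(-xt/(1-t)) = ∑_k (-xt)^k/k! (1-t)^{-(α+1+k)}` once more by the binomial series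
and collecting the absolutely convergent double series along its antidiagonals.
-/

open Finset
open scoped Nat

section Pochhammer

theorem ascPochhammer_eval_mul_eval_add {R : Type*} [CommSemiring R] (m n : ℕ) (a : R) :
    (ascPochhammer R m).eval a * (ascPochhammer R n).eval (a + m) =
      (ascPochhammer R (m + n)).eval a := by
  simp [← ascPochhammer_mul, Polynomial.eval_comp]

theorem abs_ascPochhammer_eval_le {R : Type*} [CommRing R] [LinearOrder R] [IsStrictOrderedRing R]
    {a b : R} (h : |a| ≤ b) (n : ℕ) :
    |(ascPochhammer R n).eval a| ≤ (ascPochhammer R n).eval b := by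
  induction n with
  | zero => simp
  | succ n ih =>
    have hfactor : |a + n| ≤ b + n := (abs_add_le a n).trans (by simpa using h)
    rw [ascPochhammer_succ_eval, ascPochhammer_succ_eval, abs_mul]
    exact mul_le_mul ih hfactor (abs_nonneg _) ((abs_nonneg _).trans ih)

theorem choose_natCast_add_eq_multichoose {R : Type*} [CommRing R] [BinomialRing R] (a : R)
    (k j : ℕ) : Ring.choose (((k + j : ℕ) : R) + a) j = Ring.multichoose (a + 1 + k) j := by
  rw [Ring.multichoose_eq]
  congr 1
  push_cast
  ring

variable {K : Type*} [Field K] [CharZero K]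

theorem ascPochhammer_eval_one_half (n : ℕ) :
    (ascPochhammer K n).eval (1 / 2) = (2 * n)! / (4 ^ n * n !) := by
  induction n with
  | zero => simp
  | succ n ih =>
    have hn : (n : K) + 1 ≠ 0 := n.cast_add_one_ne_zero
    have hfact : (n ! : K) ≠ 0 := by exact_mod_cast n.factorial_ne_zero
    rw [ascPochhammer_succ_eval, ih, mul_add_one, Nat.factorial_succ (2 * n + 1),
      Nat.factorial_succ (2 * n), Nat.factorial_succ n]
    push_cast
    field_simp
    ring

theorem multichoose_eq_ascPochhammer_eval_div [BinomialRing K] (a : K) (n : ℕ) :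
    Ring.multichoose a n = (ascPochhammer K n).eval a / n ! := by
  have hfact : (n ! : K) ≠ 0 := by exact_mod_cast n.factorial_ne_zero
  rw [eq_div_iff hfact, mul_comm, ← nsmul_eq_mul,
    Ring.factorial_nsmul_multichoose_eq_ascPochhammer, Polynomial.ascPochhammer_smeval_eq_eval]

theorem multichoose_one_half_add [BinomialRing K] (k j : ℕ) :
    Ring.multichoose (1 / 2 + k : K) j =
      (2 * (k + j))! * k ! / (4 ^ j * (k + j)! * (2 * k)! * j !) := by
  have hfact (m : ℕ) : (m ! : K) ≠ 0 := by exact_mod_cast m.factorial_ne_zero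
  have hsplit := ascPochhammer_eval_mul_eval_add k j (1 / 2 : K)
  rw [ascPochhammer_eval_one_half, ascPochhammer_eval_one_half, pow_add] at hsplit
  rw [multichoose_eq_ascPochhammer_eval_div]
  field_simp [hfact] at hsplit ⊢
  linear_combination hsplit

end Pochhammer

section BinomialSeries

theorem abs_multichoose_le {a b : ℝ} (h : |a| ≤ b) (n : ℕ) :
    |Ring.multichoose a n| ≤ Ring.multichoose b n := by
  rw [multichoose_eq_ascPochhammer_eval_div, multichoose_eq_ascPochhammer_eval_div, abs_div,
    Nat.abs_cast]
  gcongr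
  exact abs_ascPochhammer_eval_le h n

theorem hasSum_multichoose_mul_pow (a : ℝ) {t : ℝ} (ht : |t| < 1) :
    HasSum (fun n => Ring.multichoose a n * t ^ n) ((1 - t) ^ (-a)) := by
  have ht' : t ∈ Metric.eball (0 : ℝ) 1 := by
    simpa [enorm_eq_nnnorm, ← NNReal.coe_lt_coe] using ht
  have hpos : 0 ≤ 1 - t := by linarith [(abs_lt.1 ht).2]
  simpa [FormalMultilinearSeries.ofScalars, Ring.multichoose_eq, mul_comm, Real.rpow_neg hpos]
    using (Real.one_div_one_sub_rpow_hasFPowerSeriesOnBall_zero a).hasSum ht'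

end BinomialSeries

theorem hasSum_sum_antidiagonal {A M : Type*} [AddMonoid A] [HasAntidiagonal A] [AddCommMonoid M]
    [TopologicalSpace M] [ContinuousAdd M] [RegularSpace M] {f : A × A → M} {s : M}
    (hf : HasSum f s) : HasSum (fun n => ∑ p ∈ antidiagonal n, f p) s := by
  refine (HasAntidiagonal.sigmaAntidiagonalEquivProd.hasSum_iff.2 hf).sigma fun n => ?_
  rw [← sum_coe_sort]
  exact hasSum_fintype _

section Laguerre

/-- The generalized Laguerre polynomial
`L_n^{(α)}(x) = ∑_{k=0}^n (-1)^k binom(n + α, n - k) x^k / k!`, summed over the pairs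
`(k, n - k)`. -/
noncomputable def laguerre (α : ℝ) (n : ℕ) (x : ℝ) : ℝ :=
  ∑ p ∈ antidiagonal n, Ring.choose (n + α) p.2 * ((-x) ^ p.1 / p.1 !)

/-- The `(k, j)` term of the double series for `(1 - t)^{-a} exp(yt / (1 - t))`: the index `k` comes
from the exponential and `j` from the binomial series of `(1 - t)^{-(a + k)}`. -/
noncomputable def laguerreTerm (a y t : ℝ) (p : ℕ × ℕ) : ℝ :=
  Ring.multichoose (a + p.1) p.2 * t ^ p.2 * ((y * t) ^ p.1 / p.1 !)

theorem sum_antidiagonal_laguerreTerm (α x t : ℝ) (n : ℕ) :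
    ∑ p ∈ antidiagonal n, laguerreTerm (α + 1) (-x) t p = laguerre α n x * t ^ n := by
  rw [laguerre, sum_mul]
  refine sum_congr rfl fun p hp => ?_
  obtain rfl := mem_antidiagonal.1 hp
  rw [laguerreTerm, choose_natCast_add_eq_multichoose]
  ring

theorem abs_laguerreTerm_le (a y t : ℝ) (p : ℕ × ℕ) :
    |laguerreTerm a y t p| ≤ laguerreTerm |a| |y| |t| p := by
  have hcoeff : |a + p.1| ≤ |a| + p.1 := (abs_add_le a p.1).trans_eq (by rw [Nat.abs_cast])
  simp only [laguerreTerm, abs_mul, abs_div, abs_pow, Nat.abs_cast]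
  gcongr
  exact abs_multichoose_le hcoeff p.2

theorem hasSum_laguerreTerm_right (a y : ℝ) {t : ℝ} (ht : |t| < 1) (k : ℕ) :
    HasSum (fun j => laguerreTerm a y t (k, j))
      ((1 - t) ^ (-a) * ((y * t / (1 - t)) ^ k / k !)) := by
  have hpos : 0 < 1 - t := by linarith [(abs_lt.1 ht).2]
  have hvalue : (1 - t) ^ (-a) * ((y * t / (1 - t)) ^ k / k !) =
      (1 - t) ^ (-(a + k)) * ((y * t) ^ k / k !) := by
    rw [neg_add, Real.rpow_add hpos, Real.rpow_neg hpos.le (k : ℝ), Real.rpow_natCast, div_pow]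
    ring
  rw [hvalue]
  exact (hasSum_multichoose_mul_pow (a + k) ht).mul_right _

theorem hasSum_mul_pow_div_factorial (c y : ℝ) :
    HasSum (fun k : ℕ => c * (y ^ k / k !)) (c * Real.exp y) := by
  rw [Real.exp_eq_exp_ℝ]
  exact (NormedSpace.expSeries_div_hasSum_exp y).mul_left c

theorem summable_laguerreTerm (a y : ℝ) {t : ℝ} (ht : |t| < 1) :
    Summable (laguerreTerm a y t) := by
  have hrow := hasSum_laguerreTerm_right |a| |y| (t := |t|) (by rwa [abs_abs])
  have hdom : Summable (laguerreTerm |a| |y| |t|) := by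
    refine (summable_prod_of_nonneg fun p => (abs_nonneg _).trans (abs_laguerreTerm_le a y t p)).2
      ⟨fun k => (hrow k).summable, ?_⟩
    simp only [fun k => (hrow k).tsum_eq]
    exact (hasSum_mul_pow_div_factorial _ _).summable
  exact hdom.of_norm_bounded (abs_laguerreTerm_le a y t)

theorem hasSum_laguerreTerm (a y : ℝ) {t : ℝ} (ht : |t| < 1) :
    HasSum (laguerreTerm a y t) ((1 - t) ^ (-a) * Real.exp (y * t / (1 - t))) := by
  have h := (summable_laguerreTerm a y ht).hasSum
  rwa [(h.prod_fiberwise (hasSum_laguerreTerm_right a y ht)).unique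
    (hasSum_mul_pow_div_factorial _ _)] at h

theorem hasSum_laguerre_mul_pow (α x : ℝ) {t : ℝ} (ht : |t| < 1) :
    HasSum (fun n => laguerre α n x * t ^ n)
      ((1 - t) ^ (-(α + 1)) * Real.exp (-x * t / (1 - t))) := by
  simpa only [sum_antidiagonal_laguerreTerm] using
    hasSum_sum_antidiagonal (hasSum_laguerreTerm (α + 1) (-x) ht)

end Laguerre

theorem hermiteH_two_mul (n : ℕ) (u : ℝ) :
    hermiteH (2 * n) u = 2 ^ n * n ! * laguerre (-1 / 2) n (-u ^ 2 / 2) := by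
  rw [hermiteH, laguerre, Nat.mul_div_cancel_left n two_pos, mul_sum,
    ← Finset.Nat.sum_antidiagonal_swap, Finset.Nat.sum_antidiagonal_eq_sum_range_succ_mk]
  refine sum_congr rfl fun j hj => ?_
  obtain ⟨k, rfl⟩ := Nat.exists_eq_add_of_le' (mem_range_succ_iff.1 hj)
  have hexp : 2 * (k + j) - 2 * j = 2 * k := by lia
  have hfour : (4 : ℝ) ^ j = 2 ^ j * 2 ^ j := by rw [← mul_pow]; norm_num
  have hhalf : (-1 / 2 + 1 : ℝ) = 1 / 2 := by norm_num
  have hpow : (-(-u ^ 2 / 2)) ^ k = u ^ (2 * k) / 2 ^ k := by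
    rw [neg_div, neg_neg, div_pow, pow_mul]
  simp only [Prod.swap_prod_mk, Nat.add_sub_cancel]
  rw [hexp, choose_natCast_add_eq_multichoose, hhalf, multichoose_one_half_add, hpow, hfour,
    pow_add]
  field_simp

/-- Doetsch's identity: the double lacunary generating function for Hermite
polynomials. -/
theorem doetsch (u z : ℝ) (hz : |z| < 1 / 2) :
    HasSum (fun n : ℕ => hermiteH (2 * n) u * z ^ n / Nat.factorial n)
      ((1 - 2 * z) ^ (-(1 / 2 : ℝ)) * Real.exp (u ^ 2 * z / (1 - 2 * z))) := by
  have ht : |2 * z| < 1 := by rw [abs_mul, abs_two]; linarith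
  convert! hasSum_laguerre_mul_pow (-1 / 2) (-u ^ 2 / 2) ht using 1
  · ext n
    rw [hermiteH_two_mul, mul_pow]
    field_simp
  · congr 2 <;> ring
end

section
/- Let L : ℝ[X] → ℝ be the linear functional determined by L(X^n) = (2k)!/(2^k k!) if n = 2k is even, and L(X^n) = 0 if n is odd. Then for every polynomial f ∈ ℝ[X] and every natural number n, L(X^n · f) = Σ_{j,m ≥ 0, 2j + m = n} (n!/(2^j j! m!)) · L(f^{(m)}), where f^{(m)} denotes the m-th derivative of f. -/
open Polynomial

/-- The moments of the umbra `M`: `M^{2k} = (2k)!/(2^k k!)`, `M^{odd} = 0`. -/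
noncomputable def Mmoment (n : ℕ) : ℝ :=
  if n % 2 = 0 then (Nat.factorial n : ℝ) / (2 ^ (n / 2) * Nat.factorial (n / 2))
  else 0

/-- The linear functional `L` on `ℝ[X]` determined by `L(Xⁿ) = Mmoment n`. -/
noncomputable def L (p : Polynomial ℝ) : ℝ := p.sum fun k a => a * Mmoment k

/-! Since `M^(n+2) = (n+1) M^n`, the functional `L` turns multiplication by `X` into the derivative
`D`, that is, `L(X p) = L(D p)`. With the Leibniz rule this gives
`L(X^(n+1) f) = L(X^n D f) + n L(X^(n-1) f)`, and Pascal's rule shows that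
`∑_{i+j=n} C(n,i) M^i L(D^j f)` satisfies the same recurrence. Only even `i` contribute. -/

open Finset
open scoped Nat

/-- The number of perfect matchings of an `n`-element set; these are the moments of `M` as natural
numbers. For `n = 0` the truncated subtraction gives `0‼ = 1`, the empty matching. -/
def numPerfectMatchings (n : ℕ) : ℕ := if Even n then (n - 1)‼ else 0

theorem numPerfectMatchings_zero : numPerfectMatchings 0 = 1 := rfl

theorem numPerfectMatchings_one : numPerfectMatchings 1 = 0 := rfl

theorem numPerfectMatchings_add_two (n : ℕ) :
    numPerfectMatchings (n + 2) = (n + 1) * numPerfectMatchings n := by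
  simp [numPerfectMatchings, Nat.even_add, Nat.doubleFactorial_add_one]

theorem numPerfectMatchings_two_mul (j : ℕ) : numPerfectMatchings (2 * j) = (2 * j - 1)‼ :=
  if_pos (even_two_mul j)

theorem numPerfectMatchings_of_odd {n : ℕ} (hn : Odd n) : numPerfectMatchings n = 0 :=
  if_neg (Nat.not_even_iff_odd.mpr hn)

theorem two_pow_mul_factorial_mul_doubleFactorial (j : ℕ) :
    2 ^ j * j ! * (2 * j - 1)‼ = (2 * j)! := by
  cases j with
  | zero => rfl
  | succ j =>
    rw [← Nat.doubleFactorial_two_mul]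
    exact (Nat.factorial_eq_mul_doubleFactorial (2 * j + 1)).symm

theorem cast_choose_mul_doubleFactorial (K : Type*) [Field K] [CharZero K] {n j : ℕ}
    (h : 2 * j ≤ n) :
    ((n.choose (2 * j) * (2 * j - 1)‼ : ℕ) : K) = n ! / (2 ^ j * j ! * (n - 2 * j)!) := by
  have factorial_eq : n.choose (2 * j) * (2 * j - 1)‼ * (2 ^ j * j ! * (n - 2 * j)!) = n ! := by
    rw [← Nat.choose_mul_factorial_mul_factorial h, ← two_pow_mul_factorial_mul_doubleFactorial]
    ring
  rw [eq_div_iff (by simp [Nat.factorial_ne_zero])]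
  exact_mod_cast factorial_eq

theorem Mmoment_eq_numPerfectMatchings (n : ℕ) : Mmoment n = numPerfectMatchings n := by
  obtain ⟨j, rfl | rfl⟩ := n.even_or_odd'
  · simpa [Mmoment, numPerfectMatchings_two_mul] using
      (cast_choose_mul_doubleFactorial ℝ (le_refl (2 * j))).symm
  · simp [Mmoment, numPerfectMatchings_of_odd (odd_two_mul_add_one j), Nat.add_mod]

section AdditiveFunctionals

variable {M : Type*} [AddCommMonoid M]

theorem sum_antidiagonal_choose_nsmul_numPerfectMatchings_succ (g : ℕ → M) (n : ℕ) :
    ∑ ij ∈ antidiagonal (n + 1),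
        (n + 1).choose ij.1 • numPerfectMatchings (ij.1 + 1) • g ij.2 =
      (n + 1) • ∑ ij ∈ antidiagonal n, n.choose ij.1 • numPerfectMatchings ij.1 • g ij.2 := by
  rw [Nat.sum_antidiagonal_succ, smul_sum]
  simp only [zero_add, numPerfectMatchings_one, zero_smul, smul_zero]
  refine sum_congr rfl fun ⟨i, j⟩ _ => ?_
  simp only [numPerfectMatchings_add_two, smul_smul, ← mul_assoc, Nat.add_one_mul_choose_eq]

theorem sum_antidiagonal_choose_nsmul_numPerfectMatchings (g : ℕ → M) (n : ℕ) :
    ∑ ij ∈ antidiagonal n, n.choose ij.1 • numPerfectMatchings ij.1 • g ij.2 =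
      ∑ j ∈ range (n / 2 + 1), (n.choose (2 * j) * (2 * j - 1)‼) • g (n - 2 * j) := by
  symm
  refine sum_of_injOn (fun j => (2 * j, n - 2 * j)) ?_ ?_ ?_ ?_
  · intro a _ b _ h
    grind
  · intro j hj
    simp only [coe_range, Set.mem_Iio, mem_coe, HasAntidiagonal.mem_antidiagonal] at hj ⊢
    omega
  · rintro ⟨i, j⟩ hij i_notMem
    have i_odd : Odd i := by
      rw [← Nat.not_even_iff_odd]
      rintro ⟨k, rfl⟩
      rw [HasAntidiagonal.mem_antidiagonal] at hij
      refine i_notMem ⟨k, ?_, ?_⟩ <;> grind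
    simp [numPerfectMatchings_of_odd i_odd]
  · intro j _
    rw [numPerfectMatchings_two_mul, smul_smul]

variable {R : Type*} [Semiring R] {Λ : R[X] →+ M}

theorem map_X_pow_succ_mul (hΛ : ∀ p, Λ (X * p) = Λ (derivative p)) (f : R[X]) (n : ℕ) :
    Λ (X ^ (n + 1) * f) = Λ (X ^ n * derivative f) + n • Λ (X ^ (n - 1) * f) := by
  rw [pow_succ', mul_assoc, hΛ, derivative_mul, derivative_X_pow, map_add, add_comm, ← map_nsmul,
    C_eq_natCast, mul_assoc, nsmul_eq_mul]

theorem map_X_pow_mul_eq_sum_antidiagonal (hΛ : ∀ p, Λ (X * p) = Λ (derivative p)) (f : R[X])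
    (n : ℕ) :
    Λ (X ^ n * f) =
      ∑ ij ∈ antidiagonal n,
        n.choose ij.1 • numPerfectMatchings ij.1 • Λ (derivative^[ij.2] f) := by
  induction n using Nat.strong_induction_on generalizing f with
  | _ n ih =>
    rcases n with _ | n
    · simp [numPerfectMatchings_zero]
    have pascal := sum_antidiagonal_choose_succ_nsmul
      (fun i j => numPerfectMatchings i • Λ (derivative^[j] f)) n
    have choose_symm : ∑ ij ∈ antidiagonal n,
          n.choose ij.2 • numPerfectMatchings (ij.1 + 1) • Λ (derivative^[ij.2] f) =
        ∑ ij ∈ antidiagonal n,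
          n.choose ij.1 • numPerfectMatchings (ij.1 + 1) • Λ (derivative^[ij.2] f) :=
      sum_congr rfl fun ij hij => by
        rw [Nat.choose_symm_of_eq_add (HasAntidiagonal.mem_antidiagonal.mp hij).symm]
    rw [pascal, choose_symm, map_X_pow_succ_mul hΛ, ih n n.lt_succ_self]
    simp only [Function.iterate_succ_apply]
    congr 1
    rcases n with _ | n
    · simp [numPerfectMatchings_one]
    · rw [sum_antidiagonal_choose_nsmul_numPerfectMatchings_succ
        (fun j => Λ (derivative^[j] f)), Nat.add_sub_cancel, ih n (by omega)]

theorem umbral_shift_general (hΛ : ∀ p, Λ (X * p) = Λ (derivative p)) (f : R[X]) (n : ℕ) :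
    Λ (X ^ n * f) =
      ∑ j ∈ range (n / 2 + 1),
        (n.choose (2 * j) * (2 * j - 1)‼) • Λ (derivative^[n - 2 * j] f) := by
  rw [map_X_pow_mul_eq_sum_antidiagonal hΛ,
    sum_antidiagonal_choose_nsmul_numPerfectMatchings (fun j => Λ (derivative^[j] f))]

end AdditiveFunctionals

/-- The linear functional on `R[X]` with moments `numPerfectMatchings`: the counterpart of `L` over
an arbitrary semiring, bundled as a linear map. -/
def matchingFunctional (R : Type*) [Semiring R] : R[X] →ₗ[R] R :=
  lsum fun n => numPerfectMatchings n • LinearMap.id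

theorem matchingFunctional_monomial {R : Type*} [Semiring R] (n : ℕ) (a : R) :
    matchingFunctional R (monomial n a) = numPerfectMatchings n • a := by
  simp [matchingFunctional, lsum_apply, sum_monomial_index]

theorem matchingFunctional_X_mul {R : Type*} [Semiring R] (p : R[X]) :
    matchingFunctional R (X * p) = matchingFunctional R (derivative p) := by
  induction p using Polynomial.induction_on' with
  | add p q hp hq => rw [mul_add, map_add, hp, hq, derivative_add, map_add]
  | monomial n a =>
    rw [X_mul_monomial, derivative_monomial, matchingFunctional_monomial,
      matchingFunctional_monomial]
    rcases n with _ | n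
    · simp [numPerfectMatchings_one]
    · rw [numPerfectMatchings_add_two, Nat.add_sub_cancel, ← nsmul_eq_mul', smul_smul, mul_comm]

theorem matchingFunctional_real_apply (p : ℝ[X]) : matchingFunctional ℝ p = L p := by
  simp [matchingFunctional, L, lsum_apply, Mmoment_eq_numPerfectMatchings, mul_comm]

/-- The coefficient-of-`zⁿ/n!` form of the umbral identity
`e^{Mz} f(M) = e^{z²/2} f(M+z)`. -/
theorem umbral_shift (f : Polynomial ℝ) (n : ℕ) :
    L (X ^ n * f) =
      ∑ j ∈ Finset.range (n / 2 + 1),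
        (Nat.factorial n : ℝ) /
            (2 ^ j * Nat.factorial j * Nat.factorial (n - 2 * j)) *
          L (Polynomial.derivative^[n - 2 * j] f) := by
  simp only [← matchingFunctional_real_apply]
  refine (umbral_shift_general (Λ := (matchingFunctional ℝ).toAddMonoidHom)
    matchingFunctional_X_mul f n).trans (sum_congr rfl fun j hj => ?_)
  rw [nsmul_eq_mul, cast_choose_mul_doubleFactorial ℝ (by grind)]
  rfl
end

section
/- Let L : ℝ[X] → ℝ be the linear functional determined by L(X^n) = (2k)!/(2^k k!) if n = 2k is even, and L(X^n) = 0 if n is odd. Then for every polynomial f = Σ_k a_k X^k ∈ ℝ[X] and every real number z with |z| < 1/2, the series Σ_{n≥0} L(X^{2n} · f) · z^n/n! converges and equals (1 − 2z)^{−1/2} · Σ_k a_k · L(X^k) · (1 − 2z)^{−k/2}. -/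
open Polynomial

/-! The moments of `M` satisfy `m (n + 2) = (n + 1) m n`, so `m (2n + k) = 2ⁿ ((k + 1) / 2)ₙ m k`
with `(a)ₙ` the rising factorial. Hence for `f = X ^ k` the series is the binomial series of
`(1 - 2z) ^ (-(k + 1) / 2)` times `m k`, and the general case follows by linearity in `f`. -/

theorem hasSum_ascPochhammer_mul_pow_div_factorial (a : ℝ) {x : ℝ} (hx : |x| < 1) :
    HasSum (fun n : ℕ => (ascPochhammer ℝ n).eval a * x ^ n / n.factorial) ((1 - x) ^ (-a)) := by
  have choose_eq (n : ℕ) :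
      Ring.choose (a + n - 1) n = (ascPochhammer ℝ n).eval a / n.factorial := by
    rw [← Ring.multichoose_eq, eq_div_iff (by positivity), mul_comm, ← nsmul_eq_mul,
      Ring.factorial_nsmul_multichoose_eq_ascPochhammer, ascPochhammer_smeval_eq_eval]
  have mem_ball : x ∈ Metric.eball (0 : ℝ) 1 := by
    simpa [Metric.mem_eball, edist_dist] using hx
  have binomial_series :=
    (Real.one_div_one_sub_rpow_hasFPowerSeriesOnBall_zero a).hasSum mem_ball
  have one_sub_nonneg : 0 ≤ 1 - x := by linarith [(abs_lt.mp hx).2]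
  simpa [choose_eq, Real.rpow_neg one_sub_nonneg, mul_div_right_comm, mul_comm (x ^ _)]
    using binomial_series

theorem Mmoment_add_two (n : ℕ) : Mmoment (n + 2) = (n + 1) * Mmoment n := by
  rcases n.even_or_odd' with ⟨m, rfl | rfl⟩
  · have half_eq : (2 * m + 2) / 2 = m + 1 := by omega
    simp only [Mmoment, Nat.add_mod_right, Nat.mul_mod_right, if_true, half_eq,
      Nat.mul_div_cancel_left m two_pos, Nat.factorial_succ, pow_succ]
    push_cast
    field_simp
    ring
  · simp [Mmoment, Nat.add_mod]

theorem Mmoment_two_mul_add (n k : ℕ) :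
    Mmoment (2 * n + k) = 2 ^ n * (ascPochhammer ℝ n).eval ((k + 1) / 2 : ℝ) * Mmoment k := by
  induction n with
  | zero => simp
  | succ n ih =>
    rw [show 2 * (n + 1) + k = 2 * n + k + 2 by ring, Mmoment_add_two, ih, ascPochhammer_succ_eval]
    push_cast
    ring

theorem hasSum_Mmoment_two_mul_add (k : ℕ) {z : ℝ} (hz : |z| < 1 / 2) :
    HasSum (fun n : ℕ => Mmoment (2 * n + k) * z ^ n / n.factorial)
      (Mmoment k * (1 - 2 * z) ^ (-((k + 1) / 2 : ℝ))) := by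
  have abs_two_mul_lt : |2 * z| < 1 := by
    rw [abs_mul, abs_two]
    linarith
  refine ((hasSum_ascPochhammer_mul_pow_div_factorial ((k + 1) / 2 : ℝ)
    abs_two_mul_lt).mul_left (Mmoment k)).congr_fun fun n => ?_
  rw [Mmoment_two_mul_add]
  ring

theorem linearMap_mul_eq_sum_coeff_smul {R M : Type*} [CommSemiring R] [AddCommMonoid M]
    [Module R M] (φ : R[X] →ₗ[R] M) (p f : R[X]) :
    φ (p * f) = ∑ k ∈ f.support, f.coeff k • φ (p * X ^ k) := by
  conv_lhs => rw [f.as_sum_support_C_mul_X_pow]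
  simp only [← smul_eq_C_mul, Finset.mul_sum, mul_smul_comm, map_sum, map_smul]

theorem L_eq_lsum : L = lsum fun k => LinearMap.mulRight ℝ (Mmoment k) := rfl

theorem L_X_pow (k : ℕ) : L (X ^ k) = Mmoment k := by
  simp [L, X_pow_eq_monomial, sum_monomial_index]

theorem L_mul_eq_sum (p f : ℝ[X]) :
    L (p * f) = ∑ k ∈ f.support, f.coeff k * L (p * X ^ k) := by
  rw [L_eq_lsum]
  exact linearMap_mul_eq_sum_coeff_smul _ p f

/-- The analytic form of the umbral identity
`e^{M²z} f(M) = (1 − 2z)^{−1/2} f(M/√(1−2z))`. -/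
theorem umbral_msq (f : Polynomial ℝ) (z : ℝ) (hz : |z| < 1 / 2) :
    HasSum (fun n : ℕ => L (X ^ (2 * n) * f) * z ^ n / Nat.factorial n)
      ((1 - 2 * z) ^ (-(1 / 2 : ℝ)) *
        ∑ k ∈ f.support, f.coeff k * L (X ^ k) * (1 - 2 * z) ^ (-(k : ℝ) / 2)) := by
  have one_sub_pos : 0 < 1 - 2 * z := by linarith [(abs_lt.mp hz).2]
  have rpow_split (k : ℕ) : (1 - 2 * z) ^ (-((k + 1) / 2 : ℝ)) =
      (1 - 2 * z) ^ (-(1 / 2 : ℝ)) * (1 - 2 * z) ^ (-(k : ℝ) / 2) := by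
    rw [← Real.rpow_add one_sub_pos]
    congr 1
    ring
  have termwise := hasSum_sum (s := f.support) fun k _ =>
    (hasSum_Mmoment_two_mul_add k hz).mul_left (f.coeff k)
  convert! termwise using 1
  · funext n
    simp only [L_mul_eq_sum _ f, ← pow_add, L_X_pow, Finset.sum_mul, Finset.sum_div, mul_assoc,
      mul_div_assoc]
  · simp only [L_X_pow, rpow_split, Finset.mul_sum]
    exact Finset.sum_congr rfl fun k _ => by ring
end

section
/- For every real number x with 0 < |x| < 1/4, the series Σ_{n≥0} C_n · x^n converges and equals (1 − √(1 − 4x))/(2x), where C_n is the n-th Catalan number. -/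
/-!
Put `C(x) = ∑ C_n xⁿ`. By induction the partial sums of `∑ C_n / 4ⁿ` are
`2 (1 - (2N).choose N / 4 ^ N) ≤ 2`, so for `‖x‖ ≤ 1 / 4` the series `C(x)` converges absolutely and
`‖C(x)‖ ≤ 2`. Segner's recurrence and the Cauchy product give `C(x) = 1 + x C(x) ^ 2`, that is
`(1 - 2 x C(x)) ^ 2 = 1 - 4 x`. The bound `‖2 x C(x)‖ ≤ 1` selects the branch of the square root:
it places `1 - 2 x C(x)` in the open right half-plane or at the origin.
-/

open Finset

theorem centralBinom_succ_eq_mul_catalan (n : ℕ) :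
    (n + 1).centralBinom = 2 * (2 * n + 1) * catalan n := by
  refine Nat.eq_of_mul_eq_mul_left n.add_one_pos ?_
  rw [Nat.succ_mul_centralBinom_succ, ← succ_mul_catalan_eq_centralBinom]
  ring

theorem sum_range_catalan_mul_quarter_pow {K : Type*} [Field K] [CharZero K] (N : ℕ) :
    ∑ n ∈ range N, (catalan n : K) * (1 / 4) ^ n = 2 * (1 - N.centralBinom * (1 / 4) ^ N) := by
  induction N with
  | zero => simp
  | succ n ih =>
    rw [sum_range_succ, ih, centralBinom_succ_eq_mul_catalan, ← succ_mul_catalan_eq_centralBinom]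
    push_cast
    ring

theorem sum_range_catalan_mul_quarter_pow_le_two {K : Type*} [Field K] [LinearOrder K]
    [IsStrictOrderedRing K] (N : ℕ) : ∑ n ∈ range N, (catalan n : K) * (1 / 4) ^ n ≤ 2 := by
  rw [sum_range_catalan_mul_quarter_pow]
  have : 0 ≤ (N.centralBinom : K) * (1 / 4) ^ N := by positivity
  linarith

theorem summable_catalan_mul_quarter_pow :
    Summable fun n : ℕ ↦ (catalan n : ℝ) * (1 / 4) ^ n :=
  summable_of_sum_range_le (fun _ ↦ by positivity) sum_range_catalan_mul_quarter_pow_le_two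

section NormedRing

variable {A : Type*} [NormedRing A]

/-- The value `C(x) = ∑ C_n xⁿ` of the Catalan generating function at `x`. Being a `tsum`, it is
`0` when the terms are not summable. -/
noncomputable def catalanSum (x : A) : A := ∑' n : ℕ, (catalan n : A) * x ^ n

theorem catalanSum_eq_one_add_mul_sq [CompleteSpace A] {x : A}
    (hx : Summable fun n : ℕ ↦ ‖(catalan n : A) * x ^ n‖) :
    catalanSum x = 1 + x * catalanSum x ^ 2 := by
  have cauchy_coeff (n : ℕ) :
      ∑ p ∈ antidiagonal n, (catalan p.1 : A) * x ^ p.1 * (catalan p.2 * x ^ p.2) =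
        catalan (n + 1) * x ^ n := by
    rw [catalan_succ', Nat.cast_sum, sum_mul]
    refine sum_congr rfl fun p hp ↦ ?_
    rw [← mem_antidiagonal.mp hp, pow_add, Nat.cast_mul,
      (Nat.cast_commute (catalan p.2) (x ^ p.1)).symm.mul_mul_mul_comm]
  calc catalanSum x
    _ = 1 + ∑' n : ℕ, (catalan (n + 1) : A) * x ^ (n + 1) := by
      simp only [catalanSum, hx.of_norm.tsum_eq_zero_add, catalan_zero, Nat.cast_one, pow_zero,
        mul_one]
    _ = 1 + ∑' n : ℕ, x * ((catalan (n + 1) : A) * x ^ n) := by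
      simp only [pow_succ', (Nat.cast_commute _ x).left_comm]
    _ = 1 + x * catalanSum x ^ 2 := by
      have hprod := summable_norm_sum_mul_antidiagonal_of_summable_norm hx hx
      rw [sq, catalanSum, tsum_mul_tsum_eq_tsum_sum_antidiagonal_of_summable_norm hx hx,
        ← hprod.of_norm.tsum_mul_left]
      simp only [cauchy_coeff]

variable [NormOneClass A]

theorem norm_catalan_mul_pow_le {x : A} {r : ℝ} (hx : ‖x‖ ≤ r) (n : ℕ) :
    ‖(catalan n : A) * x ^ n‖ ≤ catalan n * r ^ n :=
  calc ‖(catalan n : A) * x ^ n‖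
    _ ≤ ‖(catalan n : A)‖ * ‖x ^ n‖ := norm_mul_le _ _
    _ ≤ catalan n * ‖x‖ ^ n := by
      gcongr
      · simpa only [norm_one, mul_one] using Nat.norm_cast_le (α := A) (catalan n)
      · exact norm_pow_le x n
    _ ≤ catalan n * r ^ n := by gcongr

theorem summable_norm_catalan_mul_pow {x : A} (hx : ‖x‖ ≤ 1 / 4) :
    Summable fun n : ℕ ↦ ‖(catalan n : A) * x ^ n‖ :=
  summable_catalan_mul_quarter_pow.of_nonneg_of_le (fun _ ↦ norm_nonneg _)
    (norm_catalan_mul_pow_le hx)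

theorem norm_catalanSum_le_two {x : A} (hx : ‖x‖ ≤ 1 / 4) : ‖catalanSum x‖ ≤ 2 :=
  (tsum_of_norm_bounded summable_catalan_mul_quarter_pow.hasSum (norm_catalan_mul_pow_le hx)).trans
    (Real.tsum_le_of_sum_range_le (fun _ ↦ by positivity)
      sum_range_catalan_mul_quarter_pow_le_two)

end NormedRing

section RCLike

variable {𝕜 : Type*} [RCLike 𝕜]

theorem rclike_sqrt_sq_of_re_pos {z : 𝕜} (hz : 0 < RCLike.re z) : RCLike.sqrt (z ^ 2) = z := by
  rw [RCLike.sqrt_eq_ite]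
  split_ifs with hI
  · rw [RingEquiv.symm_apply_eq, map_pow]
    exact Complex.sq_cpow_two_inv (by simpa using hz)
  · have hreal : (RCLike.re z : 𝕜) = z := by
      have hI0 : (RCLike.I : 𝕜) = 0 := RCLike.I_eq_zero_or_im_I_eq_one.resolve_right hI
      simpa only [hI0, mul_zero, add_zero] using RCLike.re_add_im z
    rw [← hreal, ← RCLike.ofReal_pow, RCLike.ofReal_re, Real.sqrt_sq hz.le]

theorem rclike_sqrt_one_sub_sq {w : 𝕜} (hw : ‖w‖ ≤ 1) : RCLike.sqrt ((1 - w) ^ 2) = 1 - w := by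
  rcases lt_or_ge (RCLike.re w) 1 with hre | hre
  · exact rclike_sqrt_sq_of_re_pos (by simpa only [map_sub, RCLike.one_re, sub_pos] using hre)
  · have hre_eq : RCLike.re w = 1 := le_antisymm ((RCLike.re_le_norm w).trans hw) hre
    have hw_eq : w = 1 := by
      rw [← RCLike.re_eq_self_of_le (hw.trans hre), hre_eq, RCLike.ofReal_one]
    simp [hw_eq]

theorem sqrt_one_sub_four_mul {x : 𝕜} (hx : ‖x‖ ≤ 1 / 4) :
    RCLike.sqrt (1 - 4 * x) = 1 - 2 * x * catalanSum x := by
  have hsq : 1 - 4 * x = (1 - 2 * x * catalanSum x) ^ 2 := by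
    linear_combination
      (4 * x) * catalanSum_eq_one_add_mul_sq (summable_norm_catalan_mul_pow hx)
  have hnorm : ‖2 * x * catalanSum x‖ ≤ 1 :=
    calc ‖2 * x * catalanSum x‖
      _ = 2 * ‖x‖ * ‖catalanSum x‖ := by simp only [norm_mul, RCLike.norm_ofNat]
      _ ≤ 2 * (1 / 4) * 2 := by gcongr; exact norm_catalanSum_le_two hx
      _ = 1 := by norm_num
  rw [hsq, rclike_sqrt_one_sub_sq hnorm]

theorem catalan_gf_general {x : 𝕜} (hx0 : x ≠ 0) (hx : ‖x‖ ≤ 1 / 4) :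
    HasSum (fun n : ℕ ↦ (catalan n : 𝕜) * x ^ n) ((1 - RCLike.sqrt (1 - 4 * x)) / (2 * x)) := by
  have hvalue : (1 - RCLike.sqrt (1 - 4 * x)) / (2 * x) = catalanSum x := by
    rw [sqrt_one_sub_four_mul hx, sub_sub_cancel, mul_div_cancel_left₀ _ (by simpa using hx0)]
  rw [hvalue]
  exact (summable_norm_catalan_mul_pow hx).of_norm.hasSum

end RCLike

/-- The Catalan number generating function: for `0 < |x| < 1/4`,
`∑_n C_n xⁿ = (1 − √(1 − 4x))/(2x)`. -/
theorem catalan_gf (x : ℝ) (hx0 : 0 < |x|) (hx : |x| < 1 / 4) :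
    HasSum (fun n : ℕ => (catalan n : ℝ) * x ^ n)
      ((1 - Real.sqrt (1 - 4 * x)) / (2 * x)) := by
  simpa only [RCLike.sqrt_real] using catalan_gf_general (abs_pos.mp hx0) hx.le
end

section
/- Let u and z be real numbers with z ≠ 0 and |12uz| < 1. Then the series Σ_{n≥1} 3^n · ((2n)!/((n+2)!·n!)) · u^{n+2} · z^n converges and equals ((1 − 12uz)^{3/2} − 1)/(108z²) + u/(6z) − u²/2. -/
/-!
Put `x = 3uz`. Up to the factor `9z²`, the series is the part of degree at least three of
`∑ (2n)!/((n+2)! n!) x^(n+2)`, and the latter is one twelfth of the binomial series of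
`(1 - 4x)^(3/2)` without its first two terms `1 - 6x`. The coefficients are found by absorption:
`C(n+2, 2) C(3/2, n+2) = C(3/2, 2) C(-1/2, n)`, and `C(-1/2, n) (-4)^n` is the central binomial
coefficient.
-/

open Nat (centralBinom)
open scoped Nat

section Coefficients

theorem succ_mul_choose_succ {R : Type*} [NonAssocRing R] [Pow R ℕ] [NatPowAssoc R]
    [BinomialRing R] (r : R) (n : ℕ) :
    ((n : R) + 1) * Ring.choose r (n + 1) = Ring.choose r n * (r - n) := by
  simpa [nsmul_eq_mul, Ring.choose_one_right] using Ring.choose_smul_choose r n.le_succ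

variable (K : Type*) [Field K] [CharZero K]

theorem choose_neg_half_mul_neg_four_pow (n : ℕ) :
    Ring.choose (-1 / 2 : K) n * (-4) ^ n = centralBinom n := by
  induction n with
  | zero => simp
  | succ n ih =>
    have h_choose := succ_mul_choose_succ (-1 / 2 : K) n
    have h_central : ((n : K) + 1) * centralBinom (n + 1) = 2 * (2 * n + 1) * centralBinom n :=
      mod_cast n.succ_mul_centralBinom_succ
    apply mul_left_cancel₀ n.cast_add_one_ne_zero
    linear_combination (-4) ^ (n + 1) * h_choose - h_central + 2 * (2 * n + 1) * ih

theorem choose_three_halves_two : Ring.choose (3 / 2 : K) 2 = 3 / 8 := by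
  have h := succ_mul_choose_succ (3 / 2 : K) 1
  rw [Ring.choose_one_right] at h
  linear_combination (norm := (push_cast; ring)) h / 2

theorem mul_choose_three_halves_add_two (n : ℕ) :
    ((n : K) + 1) * (n + 2) * Ring.choose (3 / 2 : K) (n + 2) =
      3 / 4 * Ring.choose (-1 / 2 : K) n := by
  have h := Ring.choose_add_smul_choose (-1 / 2 : K) n 2
  rw [show (-1 / 2 : K) + (2 : ℕ) = 3 / 2 by norm_num, choose_three_halves_two, nsmul_eq_mul,
    Nat.cast_choose_two] at h
  push_cast at h
  linear_combination 2 * h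

theorem cast_centralBinom_eq_mul_factorial_div (n : ℕ) :
    (centralBinom n : K) = (n + 1) * (n + 2) * ((2 * n)! / ((n + 2)! * n !)) := by
  rw [Nat.centralBinom_eq_two_mul_choose, Nat.cast_choose K (by lia : n ≤ 2 * n),
    show 2 * n - n = n by lia, Nat.factorial_succ (n + 1), Nat.factorial_succ n]
  push_cast
  have := n.cast_add_one_ne_zero (R := K)
  have : (n : K) + 1 + 1 ≠ 0 := mod_cast (n + 1).succ_ne_zero
  field_simp
  ring

theorem choose_three_halves_add_two_mul_neg_four_pow (n : ℕ) :
    Ring.choose (3 / 2 : K) (n + 2) * (-4) ^ (n + 2) =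
      12 * ((2 * n)! / ((n + 2)! * n !)) := by
  have h_ne : ((n : K) + 1) * (n + 2) ≠ 0 := mod_cast (by positivity : (n + 1) * (n + 2) ≠ 0)
  apply mul_left_cancel₀ h_ne
  linear_combination (-4) ^ (n + 2) * mul_choose_three_halves_add_two K n +
    12 * choose_neg_half_mul_neg_four_pow K n + 12 * cast_centralBinom_eq_mul_factorial_div K n

end Coefficients

theorem hasSum_one_add_cpow {x : ℂ} (hx : ‖x‖ < 1) (a : ℂ) :
    HasSum (fun n : ℕ => Ring.choose a n * x ^ n) ((1 + x) ^ a) := by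
  have hx_mem : x ∈ Metric.eball (0 : ℂ) 1 := by
    rwa [← ENNReal.ofReal_one, Metric.eball_ofReal, mem_ball_zero_iff]
  simpa only [binomialSeries_apply, List.ofFn_const, List.prod_replicate, smul_eq_mul, zero_add]
    using Complex.one_add_cpow_hasFPowerSeriesOnBall_zero.hasSum hx_mem

theorem hasSum_one_sub_four_mul_cpow_three_halves_tail {x : ℂ} (hx : ‖4 * x‖ < 1) :
    HasSum (fun n : ℕ => ((2 * n)! / ((n + 2)! * n !) : ℂ) * x ^ (n + 2))
      (((1 - 4 * x) ^ (3 / 2 : ℂ) - 1 + 6 * x) / 12) := by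
  have h_binomial := hasSum_one_add_cpow (x := -(4 * x)) (by rwa [norm_neg]) (3 / 2)
  have h_tail := ((hasSum_nat_add_iff' 2).mpr h_binomial).div_const 12
  convert! h_tail using 1
  · ext n
    rw [← neg_mul, mul_pow]
    linear_combination -x ^ (n + 2) / 12 * choose_three_halves_add_two_mul_neg_four_pow ℂ n
  · simp only [Finset.sum_range_succ, Finset.sum_range_zero, Ring.choose_zero_right,
      Ring.choose_one_right]
    ring_nf

theorem tree_gf_general {u z : ℂ} (hz : z ≠ 0) (h : ‖12 * u * z‖ < 1) :
    HasSum (fun n : ℕ =>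
        (3 : ℂ) ^ (n + 1) * ((2 * (n + 1))! / ((n + 1 + 2)! * (n + 1)!)) *
          u ^ (n + 1 + 2) * z ^ (n + 1))
      (((1 - 12 * u * z) ^ (3 / 2 : ℂ) - 1) / (108 * z ^ 2) + u / (6 * z) - u ^ 2 / 2) := by
  have h_arg : 4 * (3 * u * z) = 12 * u * z := by ring
  have h_series := hasSum_one_sub_four_mul_cpow_three_halves_tail (h_arg.symm ▸ h)
  have h_tail := ((hasSum_nat_add_iff' 1).mpr h_series).div_const (9 * z ^ 2)
  convert! h_tail using 1
  · ext n
    field_simp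
    ring
  · rw [h_arg, Finset.sum_range_one]
    simp only [mul_zero, zero_add, Nat.factorial_zero, Nat.factorial_two, Nat.cast_one,
      Nat.cast_ofNat]
    field_simp
    ring

/-- The generating function for unrooted trees with trivalent labeled internal
vertices and leaves weighted `u`:
`∑_{n≥1} 3ⁿ (2n)!/((n+2)! n!) u^{n+2} zⁿ = ((1−12uz)^{3/2} − 1)/(108z²) + u/(6z) − u²/2`. -/
theorem tree_gf (u z : ℝ) (hz : z ≠ 0) (h : |12 * u * z| < 1) :
    HasSum (fun n : ℕ =>
        (3 : ℝ) ^ (n + 1) *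
          ((Nat.factorial (2 * (n + 1)) : ℝ) /
            (Nat.factorial (n + 1 + 2) * Nat.factorial (n + 1))) *
          u ^ (n + 1 + 2) * z ^ (n + 1))
      (((1 - 12 * u * z) ^ ((3 : ℝ) / 2) - 1) / (108 * z ^ 2) + u / (6 * z) -
        u ^ 2 / 2) := by
  have h_nonneg : 0 ≤ 1 - 12 * u * z := by linarith [(abs_lt.mp h).2]
  rw [← Complex.hasSum_ofReal]
  push_cast [Complex.ofReal_cpow h_nonneg]
  exact tree_gf_general (mod_cast hz) (mod_cast h)
end

section
/- Let n and k be natural numbers with 2k ≤ n. The number of involutions σ of a set with n elements (i.e., permutations σ with σ∘σ = identity) having exactly n − 2k fixed points equals n!/(2^k · k! · (n−2k)!). -/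
/-!
A permutation `σ` with `σ ^ p = 1`, `p` prime, is a product of disjoint `p`-cycles. If there are `k`
of them, then exactly `p * k` points are moved, so fixing the number of fixed points amounts to
fixing the cycle type `p, …, p` (`k` times). A permutation of this cycle type has a centralizer of
order `p ^ k * k! * (n - p * k)!`: rotate each cycle, permute the cycles, permute the fixed points.
-/

section CycleType

open Equiv Finset Nat

theorem prod_factorial_count_replicate {ι : Type*} [DecidableEq ι] (k : ℕ) (a : ι) :
    ∏ i ∈ (Multiset.replicate k a).toFinset, ((Multiset.replicate k a).count i)! = k ! := by
  obtain rfl | hk := eq_or_ne k 0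
  · simp
  · simp [Multiset.toFinset_replicate, hk]

variable {α : Type*} [Fintype α] [DecidableEq α]

theorem card_filter_apply_eq_self_add_card_support (σ : Perm α) :
    #{x | σ x = x} + #σ.support = Fintype.card α :=
  card_filter_add_card_filter_not (s := univ) fun x ↦ σ x = x

theorem cycleType_eq_replicate_iff {p : ℕ} [Fact p.Prime] {k : ℕ} {σ : Perm α} :
    σ.cycleType = Multiset.replicate k p ↔ σ ^ p = 1 ∧ #σ.support = p * k := by
  have hp : 0 < p := (Fact.out : p.Prime).pos
  rw [Multiset.eq_replicate, ← Perm.pow_prime_eq_one_iff, and_comm, and_congr_right_iff]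
  intro hσ
  rw [← σ.sum_cycleType, Perm.cycleType_of_pow_prime_eq_one hσ, Multiset.card_replicate,
    Multiset.sum_replicate, smul_eq_mul, mul_comm, Nat.mul_right_inj hp.ne']

theorem card_filter_cycleType_eq_replicate {m k : ℕ} (hm : 2 ≤ m) (h : m * k ≤ Fintype.card α) :
    #{σ : Perm α | σ.cycleType = Multiset.replicate k m} =
      (Fintype.card α)! / (m ^ k * k ! * (Fintype.card α - m * k)!) := by
  have hsum : (Multiset.replicate k m).sum = m * k := by
    rw [Multiset.sum_replicate, smul_eq_mul, mul_comm]
  have hparts : ∀ a ∈ Multiset.replicate k m, 2 ≤ a := fun a ha ↦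
    hm.trans_eq (Multiset.eq_of_mem_replicate ha).symm
  rw [Perm.card_of_cycleType, if_pos ⟨hsum.trans_le h, hparts⟩, hsum, Multiset.prod_replicate,
    prod_factorial_count_replicate, mul_assoc, mul_comm (_ - _)!]

theorem card_involutions_general {p : ℕ} [Fact p.Prime] {k : ℕ} (h : p * k ≤ Fintype.card α) :
    #{σ : Perm α | σ ^ p = 1 ∧ #{x | σ x = x} = Fintype.card α - p * k} =
      (Fintype.card α)! / (p ^ k * k ! * (Fintype.card α - p * k)!) := by
  have hcycleType (σ : Perm α) :
      σ ^ p = 1 ∧ #{x | σ x = x} = Fintype.card α - p * k ↔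
        σ.cycleType = Multiset.replicate k p := by
    have hcard := card_filter_apply_eq_self_add_card_support σ
    rw [cycleType_eq_replicate_iff, and_congr_right_iff]
    omega
  simp_rw [hcycleType]
  exact card_filter_cycleType_eq_replicate (Fact.out : p.Prime).two_le h

end CycleType

/-- The number of involutions of an `n`-element set with exactly `n − 2k`
fixed points is `n!/(2^k k! (n−2k)!)`. -/
theorem card_involutions (n k : ℕ) (h : 2 * k ≤ n) :
    (Finset.univ.filter fun σ : Equiv.Perm (Fin n) =>
        σ * σ = 1 ∧ (Finset.univ.filter fun x => σ x = x).card = n - 2 * k).card =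
      Nat.factorial n / (2 ^ k * Nat.factorial k * Nat.factorial (n - 2 * k)) := by
  simpa [sq] using card_involutions_general (α := Fin n) (p := 2) (k := k) (by simpa using h)
end

section
/- For every natural number n and every complex number u, Σ_{j=0}^{⌊n/2⌋} n!/(2^j j! (n−2j)!) · u^{n−2j} = (−i)^n · He_n(i·u), where He_n is the n-th probabilists' Hermite polynomial (Mathlib's Polynomial.hermite n, with coefficients viewed in ℂ) and i = √(−1). -/
/-!
The coefficients of `Heₙ` vanish at degrees of parity opposite to `n`, and the coefficient of
`x ^ (n - 2j)` is `(-1) ^ j (2j - 1)‼ (n choose 2j)`. At `x = iu` the factor `i ^ (n - 2j)`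
combines with `(-i) ^ n` to `(-1) ^ j`, which cancels the sign of that coefficient.
-/

section HermiteExpansion

open Polynomial
open scoped Nat

theorem sum_range_succ_eq_sum_sub_two_mul {M : Type*} [AddCommMonoid M] {n : ℕ} {f : ℕ → M}
    (hf : ∀ k ≤ n, Odd (n + k) → f k = 0) :
    ∑ k ∈ Finset.range (n + 1), f k = ∑ j ∈ Finset.range (n / 2 + 1), f (n - 2 * j) := by
  symm
  refine Finset.sum_of_injOn (fun j ↦ n - 2 * j) ?injOn ?mapsTo ?vanish fun _ _ ↦ rfl
  case injOn =>
    intro a ha b hb hab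
    simp only [Finset.coe_range, Set.mem_Iio] at ha hb hab
    lia
  case mapsTo =>
    intro j _
    simp only [Finset.coe_range, Set.mem_Iio]
    lia
  case vanish =>
    intro k hk hk'
    rw [Finset.mem_range, Nat.lt_succ_iff] at hk
    refine hf k hk (Nat.not_even_iff_odd.mp ?_)
    rintro ⟨m, hm⟩
    refine hk' ⟨n - m, ?_, ?_⟩
    · simp only [Finset.coe_range, Set.mem_Iio]
      lia
    · dsimp only
      lia

theorem coeff_hermite_sub_two_mul {n j : ℕ} (hj : 2 * j ≤ n) :
    (hermite n).coeff (n - 2 * j) = (-1) ^ j * (2 * j - 1)‼ * n.choose (2 * j) := by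
  have h := coeff_hermite_explicit j (n - 2 * j)
  rwa [Nat.add_sub_cancel' hj, Nat.choose_symm hj] at h

theorem aeval_hermite_eq_sum {A : Type*} [Ring A] (n : ℕ) (x : A) :
    aeval x (hermite n) = ∑ j ∈ Finset.range (n / 2 + 1),
      (-1) ^ j * (2 * j - 1)‼ * n.choose (2 * j) * x ^ (n - 2 * j) := by
  rw [aeval_eq_sum_range, natDegree_hermite, sum_range_succ_eq_sum_sub_two_mul]
  · refine Finset.sum_congr rfl fun j hj ↦ ?_
    have hj : 2 * j ≤ n := by grind
    rw [coeff_hermite_sub_two_mul hj, zsmul_eq_mul]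
    push_cast
    rfl
  · intro k _ hk
    rw [coeff_hermite_of_odd_add hk, zero_smul]

theorem neg_pow_mul_mul_pow_sub_two_mul {R : Type*} [CommRing R] {i : R} (hi : i ^ 2 = -1)
    {n j : ℕ} (hj : 2 * j ≤ n) (u : R) :
    (-i) ^ n * (i * u) ^ (n - 2 * j) = (-1) ^ j * u ^ (n - 2 * j) := by
  obtain ⟨k, rfl⟩ := Nat.exists_eq_add_of_le hj
  have h_even : (-i) ^ (2 * j) = (-1) ^ j := by rw [pow_mul, neg_sq, hi]
  have h_inv : -i * i = 1 := by rw [neg_mul, ← sq, hi, neg_neg]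
  rw [Nat.add_sub_cancel_left, pow_add, h_even, mul_assoc, ← mul_pow, ← mul_assoc, h_inv, one_mul]

theorem neg_pow_mul_aeval_hermite {R : Type*} [CommRing R] {i : R} (hi : i ^ 2 = -1)
    (n : ℕ) (u : R) :
    (-i) ^ n * aeval (i * u) (hermite n) = ∑ j ∈ Finset.range (n / 2 + 1),
      (2 * j - 1)‼ * n.choose (2 * j) * u ^ (n - 2 * j) := by
  rw [aeval_hermite_eq_sum, Finset.mul_sum]
  refine Finset.sum_congr rfl fun j hj ↦ ?_
  have hj : 2 * j ≤ n := by grind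
  have h_sign : (-1 : R) ^ j * (-1) ^ j = 1 := by rw [← mul_pow, neg_one_mul, neg_neg, one_pow]
  calc (-i) ^ n * ((-1) ^ j * (2 * j - 1)‼ * n.choose (2 * j) * (i * u) ^ (n - 2 * j))
      = (-1) ^ j * (2 * j - 1)‼ * n.choose (2 * j) * ((-i) ^ n * (i * u) ^ (n - 2 * j)) := by ring
    _ = (-1) ^ j * (-1) ^ j * ((2 * j - 1)‼ * n.choose (2 * j) * u ^ (n - 2 * j)) := by
        rw [neg_pow_mul_mul_pow_sub_two_mul hi hj]
        ring
    _ = (2 * j - 1)‼ * n.choose (2 * j) * u ^ (n - 2 * j) := by rw [h_sign, one_mul]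

theorem factorial_two_mul_eq_mul_doubleFactorial (j : ℕ) :
    (2 * j)! = 2 ^ j * j ! * (2 * j - 1)‼ := by
  cases j with
  | zero => rfl
  | succ j =>
    rw [← Nat.doubleFactorial_two_mul]
    exact Nat.factorial_eq_mul_doubleFactorial (2 * j + 1)

theorem factorial_div_eq_doubleFactorial_mul_choose (K : Type*) [Field K] [CharZero K] {n j : ℕ}
    (hj : 2 * j ≤ n) :
    (n ! : K) / (2 ^ j * j ! * (n - 2 * j)!) = (2 * j - 1)‼ * n.choose (2 * j) := by
  have h_denom : (2 ^ j * j ! * (n - 2 * j)! : K) ≠ 0 := by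
    exact_mod_cast (by positivity : 2 ^ j * j ! * (n - 2 * j)! ≠ 0)
  have h_factorial : n ! = (2 * j - 1)‼ * n.choose (2 * j) * (2 ^ j * j ! * (n - 2 * j)!) := by
    rw [← Nat.choose_mul_factorial_mul_factorial hj, factorial_two_mul_eq_mul_doubleFactorial]
    ring
  rw [div_eq_iff h_denom]
  exact_mod_cast h_factorial

theorem hermiteH_eq_hermite_general {K : Type*} [Field K] [CharZero K] {i : K} (hi : i ^ 2 = -1)
    (n : ℕ) (u : K) :
    ∑ j ∈ Finset.range (n / 2 + 1),
        (n ! : K) / (2 ^ j * j ! * (n - 2 * j)!) * u ^ (n - 2 * j) =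
      (-i) ^ n * aeval (i * u) (hermite n) := by
  rw [neg_pow_mul_aeval_hermite hi]
  refine Finset.sum_congr rfl fun j hj ↦ ?_
  have hj : 2 * j ≤ n := by grind
  rw [factorial_div_eq_doubleFactorial_mul_choose K hj]

end HermiteExpansion

open Polynomial in
/-- The renormalized Hermite polynomial `h_n(u)` equals `(−i)ⁿ Heₙ(iu)`, where
`Heₙ` is the probabilists' Hermite polynomial. -/
theorem hermiteH_eq_hermite (n : ℕ) (u : ℂ) :
    ∑ j ∈ Finset.range (n / 2 + 1),
        (Nat.factorial n : ℂ) /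
            (2 ^ j * Nat.factorial j * Nat.factorial (n - 2 * j)) *
          u ^ (n - 2 * j) =
      (-Complex.I) ^ n * Polynomial.aeval (Complex.I * u) (Polynomial.hermite n) :=
  hermiteH_eq_hermite_general Complex.I_sq n u
end
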